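/- arXiv:1611.07214 — 2 statements merged into one kernel-verified Lean document; each statement's English description precedes it below -/
import Mathlib

section
/- Divergence interchange formula: Let T be a rooted tree with no infinite geodesic, no vertex with exactly one successor, nonempty boundary, length function ℓ, and let P and Q be fully supported probability measures on ∂T with ℓ(P) < ∞. If H(P) = ∑_{v∈∂T} P(v)·log₂(1/P(v)) is finite and the function v ↦ P(v)·log₂(P(v)/Q(v)) is absolutely summable over ∂T, then for every interior node x the series D_{p,q}(x) = ∑_{y∈N(x)} p(y|x)·log₂(p(y|x)/q(y|x)) is absolutely convergent, and D(P‖Q)/ℓ(P) = ∑_{x ∈ interior T} μ_P(x)·D_{p,q}(x)/ℓ(x), where D(P‖Q) = ∑_{v∈∂T} P(v)·log₂(P(v)/Q(v)). -/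
open scoped BigOperators
open Filter

noncomputable section

/-- The entropy function `φ(t) = t·log₂(1/t)` (which vanishes at `t = 0`). -/
def phi (t : ℝ) : ℝ := t * Real.logb 2 (1 / t)

/-- A rooted tree: a set of finite lists over ℕ containing the empty list (the root)
and closed under taking prefixes. -/
def IsTree (T : Set (List ℕ)) : Prop :=
  ([] : List ℕ) ∈ T ∧ ∀ x ∈ T, ∀ y : List ℕ, y <+: x → y ∈ T

/-- The successors of `x` in `T`: one-entry extensions of `x` lying in `T`. -/
def succs (T : Set (List ℕ)) (x : List ℕ) : Set (List ℕ) :=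
  {y | y ∈ T ∧ ∃ n : ℕ, y = x ++ [n]}

/-- `x` is a leaf of `T`. -/
def IsLeaf (T : Set (List ℕ)) (x : List ℕ) : Prop :=
  x ∈ T ∧ succs T x = ∅

/-- The boundary of `T`: its set of leaves. -/
def bdry (T : Set (List ℕ)) : Set (List ℕ) := {x | IsLeaf T x}

/-- The interior of `T`. -/
def intr (T : Set (List ℕ)) : Set (List ℕ) := T \ bdry T

/-- No vertex has exactly one successor. -/
def NoUnary (T : Set (List ℕ)) : Prop :=
  ∀ x ∈ T, ∀ y : List ℕ, succs T x ≠ {y}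

/-- `T` has no infinite geodesic. -/
def NoInfGeo (T : Set (List ℕ)) : Prop :=
  ¬ ∃ ξ : ℕ → ℕ, ∀ n : ℕ, (List.ofFn fun i : Fin n => ξ i) ∈ T

/-- `∂T_x`: the set of leaves having `x` as a prefix. -/
def cone (T : Set (List ℕ)) (x : List ℕ) : Set (List ℕ) :=
  {v | v ∈ bdry T ∧ x <+: v}

/-- `P(∂T_x)`. -/
def mass (T : Set (List ℕ)) (P : List ℕ → ℝ) (x : List ℕ) : ℝ :=
  ∑' v : cone T x, P v

/-- `|x|_ℓ`: the sum of `ℓ(y)` over the proper prefixes `y` of `x`. -/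
def lenWt (ℓ : List ℕ → ℝ) (x : List ℕ) : ℝ :=
  ∑ i ∈ Finset.range x.length, ℓ (x.take i)

/-- Expected length `ℓ(P)`. -/
def expLen (T : Set (List ℕ)) (ℓ P : List ℕ → ℝ) : ℝ :=
  ∑' v : bdry T, lenWt ℓ v * P v

/-- Forward transition probability `p(y|x) = P(∂T_y)/P(∂T_x)`. -/
def fwd (T : Set (List ℕ)) (P : List ℕ → ℝ) (x y : List ℕ) : ℝ :=
  mass T P y / mass T P x

/-- Node-average measure `μ_P(x) = ℓ(x)·P(∂T_x)/ℓ(P)`. -/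
def nodeAvg (T : Set (List ℕ)) (ℓ P : List ℕ → ℝ) (x : List ℕ) : ℝ :=
  ℓ x * mass T P x / expLen T ℓ P

/-- A (fully supported) probability measure on a set `S` of vertices. -/
def IsProbOn (S : Set (List ℕ)) (P : List ℕ → ℝ) : Prop :=
  (∀ v ∈ S, 0 < P v) ∧ HasSum (fun v : S => P v) 1

/-- The local divergence `D_{p,q}(x) = ∑_{y∈N(x)} p(y|x)·log₂(p(y|x)/q(y|x))`. -/
def Dloc (T : Set (List ℕ)) (P Q : List ℕ → ℝ) (x : List ℕ) : ℝ :=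
  ∑' y : succs T x, fwd T P x y * Real.logb 2 (fwd T P x y / fwd T Q x y)

lemma tree_ind {T : Set (List ℕ)} (hT : IsTree T) (hG : NoInfGeo T) (C : List ℕ → Prop)
    (h : ∀ x ∈ T, (∀ y ∈ succs T x, C y) → C x) : ∀ x ∈ T, C x := by
  by_contra hc
  push Not at hc
  obtain ⟨x₀, hx₀, hn⟩ := hc
  have step : ∀ x : {x // x ∈ T ∧ ¬ C x}, ∃ y : {x // x ∈ T ∧ ¬ C x}, ∃ n : ℕ, y.1 = x.1 ++ [n] := by
    rintro ⟨x, hx, hnx⟩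
    have : ∃ y ∈ succs T x, ¬ C y := by
      by_contra hc
      push Not at hc
      exact hnx (h x hx hc)
    obtain ⟨y, ⟨hy, n, hyn⟩, hny⟩ := this
    exact ⟨⟨y, hy, hny⟩, n, hyn⟩
  choose nx hnx using step
  let s : ℕ → {x // x ∈ T ∧ ¬ C x} := fun n => nx^[n] ⟨x₀, hx₀, hn⟩
  have hs : ∀ n, ∃ k : ℕ, (s (n+1)).1 = (s n).1 ++ [k] := by
    intro n
    have : s (n+1) = nx (s n) := Function.iterate_succ_apply' _ _ _
    rw [this]; exact hnx _
  have hlen : ∀ n, n ≤ (s n).1.length := by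
    intro n
    induction n with
    | zero => simp
    | succ n ih => obtain ⟨k, hk⟩ := hs n; rw [hk]; simp; exact ih
  have hpre : ∀ n m, n ≤ m → (s n).1 <+: (s m).1 := by
    intro n m hnm
    induction m, hnm using Nat.le_induction with
    | base => exact List.prefix_refl _
    | succ m _ ih =>
      obtain ⟨k, hk⟩ := hs m
      rw [hk]; exact ih.trans (List.prefix_append _ _)
  apply hG
  refine ⟨fun i => (s (i+1)).1.getD i 0, fun n => ?_⟩
  refine hT.2 _ (s n).2.1 _ ?_
  have : (List.ofFn fun i : Fin n => (s (i+1)).1.getD i 0) = (s n).1.take n := by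
    apply List.ext_getElem
    · simp [hlen n]
    · intro i h1 h2
      have hi : i < n := by simpa using h1
      have h3 : i < (s (i+1)).1.length := lt_of_lt_of_le (Nat.lt_succ_self i) (hlen (i+1))
      have := (hpre (i+1) n hi).getElem h3
      simp [List.getElem?_eq_getElem h3, this]
  rw [this]
  exact List.take_prefix _ _

lemma pre_unique {T : Set (List ℕ)} {x y y' v : List ℕ} (hy : y ∈ succs T x) (hy' : y' ∈ succs T x)
    (h : y <+: v) (h' : y' <+: v) : y = y' := by
  obtain ⟨_, n, rfl⟩ := hy
  obtain ⟨_, m, rfl⟩ := hy'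
  exact (List.prefix_of_prefix_length_le h h' (by simp)).eq_of_length (by simp)

lemma exists_succ {T : Set (List ℕ)} (hT : IsTree T) {x v : List ℕ} (hv : v ∈ T) (h : x <+: v)
    (hne : v ≠ x) : ∃ y ∈ succs T x, y <+: v := by
  obtain ⟨t, rfl⟩ := h
  cases t with
  | nil => simp at hne
  | cons a t =>
    have : x ++ [a] <+: x ++ a :: t := ⟨t, by simp⟩
    exact ⟨x ++ [a], ⟨hT.2 _ hv _ this, a, rfl⟩, this⟩

lemma succ_pre {T : Set (List ℕ)} {x y : List ℕ} (hy : y ∈ succs T x) : x <+: y := by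
  obtain ⟨_, n, rfl⟩ := hy
  exact List.prefix_append _ _

def icone (T : Set (List ℕ)) (x : List ℕ) : Set (List ℕ) :=
  {v | v ∈ intr T ∧ x <+: v}

lemma cone_eq {T : Set (List ℕ)} (hT : IsTree T) {x : List ℕ} (hx : x ∈ intr T) :
    cone T x = ⋃ y : succs T x, cone T y := by
  ext v
  simp only [Set.mem_iUnion]
  constructor
  · rintro ⟨hv, h⟩
    obtain ⟨y, hy, hyv⟩ := exists_succ hT hv.1 h (by rintro rfl; exact hx.2 hv)
    exact ⟨⟨y, hy⟩, hv, hyv⟩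
  · rintro ⟨⟨y, hy⟩, hv, h⟩
    exact ⟨hv, (succ_pre hy).trans h⟩

lemma icone_eq {T : Set (List ℕ)} (hT : IsTree T) {x : List ℕ} (hx : x ∈ intr T) :
    icone T x = {x} ∪ ⋃ y : succs T x, icone T y := by
  ext v
  simp only [Set.mem_iUnion, Set.mem_union, Set.mem_singleton_iff]
  constructor
  · rintro ⟨hv, h⟩
    by_cases e : v = x
    · exact Or.inl e
    obtain ⟨y, hy, hyv⟩ := exists_succ hT hv.1 h e
    exact Or.inr ⟨⟨y, hy⟩, hv, hyv⟩
  · rintro (rfl | ⟨⟨y, hy⟩, hv, h⟩)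
    · exact ⟨hx, List.prefix_refl _⟩
    · exact ⟨hv, (succ_pre hy).trans h⟩

lemma cone_disj (T : Set (List ℕ)) (x : List ℕ) :
    Pairwise (Function.onFun Disjoint fun y : succs T x => cone T y) := by
  rintro ⟨y, hy⟩ ⟨y', hy'⟩ hne
  refine Set.disjoint_left.2 fun v hv hv' => hne (Subtype.ext ?_)
  exact pre_unique hy hy' hv.2 hv'.2

lemma icone_disj (T : Set (List ℕ)) (x : List ℕ) :
    Pairwise (Function.onFun Disjoint fun y : succs T x => icone T y) := by
  rintro ⟨y, hy⟩ ⟨y', hy'⟩ hne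
  refine Set.disjoint_left.2 fun v hv hv' => hne (Subtype.ext ?_)
  exact pre_unique hy hy' hv.2 hv'.2

lemma cone_summable {T : Set (List ℕ)} {f : List ℕ → ℝ} (hf : Summable fun v : bdry T => f v)
    (x : List ℕ) : Summable fun v : cone T x => f v :=
  hf.comp_injective (i := fun v : cone T x => (⟨v.1, v.2.1⟩ : bdry T))
    (fun a b h => Subtype.ext (by simpa using h))

lemma mass_hasSum {T : Set (List ℕ)} (hT : IsTree T) {f : List ℕ → ℝ}
    (hf : Summable fun v : bdry T => f v) {x : List ℕ} (hx : x ∈ intr T) :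
    HasSum (fun y : succs T x => mass T f y) (mass T f x) := by
  have h := (cone_summable hf x).hasSum
  rw [← mass] at h
  let e := Set.unionEqSigmaOfDisjoint (cone_disj T x)
  let e' := (Equiv.setCongr (cone_eq hT hx)).trans e
  rw [← e'.symm.hasSum_iff] at h
  refine h.sigma (f := (fun v : cone T x => f v) ∘ e'.symm) fun y => ?_
  exact (cone_summable hf y).hasSum

lemma cone_leaf {T : Set (List ℕ)} (hT : IsTree T) {x : List ℕ} (hx : x ∈ bdry T) :
    cone T x = {x} := by
  ext v
  constructor
  · rintro ⟨hv, h⟩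
    by_contra e
    obtain ⟨y, hy, _⟩ := exists_succ hT hv.1 h e
    rw [hx.2] at hy; exact hy
  · rintro rfl
    exact ⟨hx, List.prefix_refl _⟩

lemma mass_leaf {T : Set (List ℕ)} (hT : IsTree T) {x : List ℕ} (hx : x ∈ bdry T) (f : List ℕ → ℝ) :
    mass T f x = f x := by
  rw [mass, cone_leaf hT hx]; exact tsum_singleton x f

lemma cone_ne {T : Set (List ℕ)} (hT : IsTree T) (hG : NoInfGeo T) :
    ∀ x ∈ T, (cone T x).Nonempty := by
  apply tree_ind hT hG
  intro x hx ih
  by_cases hb : x ∈ bdry T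
  · exact ⟨x, hb, List.prefix_refl _⟩
  · have : (succs T x).Nonempty := by
      rw [Set.nonempty_iff_ne_empty]; exact fun h => hb ⟨hx, h⟩
    obtain ⟨y, hy⟩ := this
    obtain ⟨v, hv, h⟩ := ih y hy
    exact ⟨v, hv, (succ_pre hy).trans h⟩

lemma mass_pos {T : Set (List ℕ)} (hT : IsTree T) (hG : NoInfGeo T) {P : List ℕ → ℝ}
    (hP : IsProbOn (bdry T) P) {x : List ℕ} (hx : x ∈ T) : 0 < mass T P x := by
  obtain ⟨v, hv⟩ := cone_ne hT hG x hx
  exact (cone_summable hP.2.summable x).tsum_pos (fun w => (hP.1 w w.2.1).le) ⟨v, hv⟩ (hP.1 v hv.1)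

lemma log_bd {a b : ℝ} (ha : 0 < a) (hb : 0 < b) :
    (a - b) / Real.log 2 ≤ a * Real.logb 2 (a / b) := by
  rw [Real.logb, ← mul_div_assoc]
  apply div_le_div_of_nonneg_right _ (Real.log_pos one_lt_two).le
  have := Real.log_le_sub_one_of_pos (div_pos hb ha)
  have h2 : Real.log (a / b) = - Real.log (b / a) := by
    rw [← Real.log_inv, inv_div]
  rw [h2]
  have h3 : a * Real.log (b/a) ≤ a * (b/a - 1) := mul_le_mul_of_nonneg_left this ha.le
  have h4 : a * (b/a - 1) = b - a := by field_simp
  linarith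

lemma gibbs {ι : Type*} {a b : ι → ℝ} {A B D : ℝ} (ha : ∀ i, 0 < a i) (hb : ∀ i, 0 < b i)
    (hA : HasSum a A) (hB : HasSum b B) (hApos : 0 < A) (hBpos : 0 < B)
    (hD : HasSum (fun i => a i * Real.logb 2 (a i / b i)) D) :
    A * Real.logb 2 (A / B) ≤ D := by
  have h1 : HasSum (fun i => (a i - b i * (A / B)) / Real.log 2 + a i * Real.logb 2 (A / B))
      ((A - B * (A/B)) / Real.log 2 + A * Real.logb 2 (A / B)) :=
    ((hA.sub (hB.mul_right _)).div_const _).add (hA.mul_right _)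
  have h2 := hasSum_le (fun i => ?_) h1 hD
  · have : A - B * (A/B) = 0 := by field_simp; ring
    rw [this] at h2; simpa using h2
  · have h3 := log_bd (ha i) (mul_pos (hb i) (div_pos hApos hBpos))
    have h4 : a i / b i = a i / (b i * (A/B)) * (A / B) := by
      have := hb i; field_simp
    have hbi := hb i
    have hai := ha i
    rw [h4, Real.logb_mul (by positivity) (by positivity), mul_add]
    linarith

/-- pointwise divergence density -/
def dd (P Q : List ℕ → ℝ) (v : List ℕ) : ℝ := P v * Real.logb 2 (P v / Q v)

/-- divergence of coarse-grained node -/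
def FF (T : Set (List ℕ)) (P Q : List ℕ → ℝ) (x : List ℕ) : ℝ :=
  mass T P x * Real.logb 2 (mass T P x / mass T Q x)

section
variable {T : Set (List ℕ)} (hT : IsTree T) (hG : NoInfGeo T)
    {P Q : List ℕ → ℝ} (hP : IsProbOn (bdry T) P) (hQ : IsProbOn (bdry T) Q)
    (hD : Summable fun v : bdry T => dd P Q v)

lemma FF_le (hT : IsTree T) (hG : NoInfGeo T)
    (hP : IsProbOn (bdry T) P) (hQ : IsProbOn (bdry T) Q)
    (hD : Summable fun v : bdry T => dd P Q v) {x : List ℕ} (hx : x ∈ T) :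
    FF T P Q x ≤ mass T (dd P Q) x :=
  gibbs (a := fun v : cone T x => P v) (b := fun v : cone T x => Q v)
    (fun v => hP.1 v v.2.1) (fun v => hQ.1 v v.2.1)
    (cone_summable hP.2.summable x).hasSum (cone_summable hQ.2.summable x).hasSum
    (mass_pos hT hG hP hx) (mass_pos hT hG hQ hx) (cone_summable hD x).hasSum

lemma FF_summable (hT : IsTree T) (hG : NoInfGeo T)
    (hP : IsProbOn (bdry T) P) (hQ : IsProbOn (bdry T) Q)
    (hD : Summable fun v : bdry T => dd P Q v) {x : List ℕ} (hx : x ∈ intr T) :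
    Summable fun y : succs T x => FF T P Q y := by
  have hp := (mass_hasSum hT hP.2.summable hx).summable
  have hq := (mass_hasSum hT hQ.2.summable hx).summable
  have hd := (mass_hasSum hT hD hx).summable
  have key : Summable fun y : succs T x => mass T (dd P Q) y - FF T P Q y := by
    refine Summable.of_nonneg_of_le (fun y => sub_nonneg.2 (FF_le hT hG hP hQ hD y.2.1)) (fun y => ?_)
      (hd.sub ((hp.sub hq).div_const (Real.log 2)))
    exact sub_le_sub_left (log_bd (mass_pos hT hG hP y.2.1) (mass_pos hT hG hQ y.2.1)) _
  simpa using hd.sub key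

lemma fwd_term (hT : IsTree T) (hG : NoInfGeo T)
    (hP : IsProbOn (bdry T) P) (hQ : IsProbOn (bdry T) Q) {x y : List ℕ} (hx : x ∈ T) (hy : y ∈ T) :
    fwd T P x y * Real.logb 2 (fwd T P x y / fwd T Q x y)
     = (FF T P Q y - mass T P y * Real.logb 2 (mass T P x / mass T Q x)) / mass T P x := by
  have h1 := mass_pos hT hG hP hx
  have h2 := mass_pos hT hG hQ hx
  have h3 := mass_pos hT hG hP hy
  have h4 := mass_pos hT hG hQ hy
  have : fwd T P x y / fwd T Q x y = (mass T P y / mass T Q y) / (mass T P x / mass T Q x) := by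
    unfold fwd; field_simp
  rw [this, Real.logb_div (by positivity) (by positivity), FF, fwd]
  ring

lemma Dloc_hasSum (hT : IsTree T) (hG : NoInfGeo T)
    (hP : IsProbOn (bdry T) P) (hQ : IsProbOn (bdry T) Q)
    (hD : Summable fun v : bdry T => dd P Q v) {x : List ℕ} (hx : x ∈ intr T) :
    HasSum (fun y : succs T x => fwd T P x y * Real.logb 2 (fwd T P x y / fwd T Q x y))
      (((∑' y : succs T x, FF T P Q y) - FF T P Q x) / mass T P x) := by
  have := (((FF_summable hT hG hP hQ hD hx).hasSum).sub
    ((mass_hasSum hT hP.2.summable hx).mul_right (Real.logb 2 (mass T P x / mass T Q x)))).div_const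
      (mass T P x)
  refine this.congr_fun ?_
  intro y
  exact fwd_term hT hG hP hQ hx.1 y.2.1

lemma Dloc_nonneg (hT : IsTree T) (hG : NoInfGeo T)
    (hP : IsProbOn (bdry T) P) (hQ : IsProbOn (bdry T) Q)
    (hD : Summable fun v : bdry T => dd P Q v) {x : List ℕ} (hx : x ∈ intr T) :
    0 ≤ mass T P x * Dloc T P Q x := by
  have h1 := mass_pos hT hG hP hx.1
  rw [Dloc, (Dloc_hasSum hT hG hP hQ hD hx).tsum_eq, mul_div_cancel₀ _ h1.ne', sub_nonneg]
  exact gibbs (a := fun y : succs T x => mass T P y) (b := fun y : succs T x => mass T Q y)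
    (fun y => mass_pos hT hG hP y.2.1) (fun y => mass_pos hT hG hQ y.2.1)
    (mass_hasSum hT hP.2.summable hx) (mass_hasSum hT hQ.2.summable hx) h1
    (mass_pos hT hG hQ hx.1) (FF_summable hT hG hP hQ hD hx).hasSum

lemma main_ind (hT : IsTree T) (hG : NoInfGeo T)
    (hP : IsProbOn (bdry T) P) (hQ : IsProbOn (bdry T) Q)
    (hD : Summable fun v : bdry T => dd P Q v) : ∀ x ∈ T,
    HasSum (fun z : icone T x => mass T P z * Dloc T P Q z) (mass T (dd P Q) x - FF T P Q x) := by
  apply tree_ind hT hG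
  intro x hx ih
  by_cases hb : x ∈ bdry T
  · have he : icone T x = ∅ := by
      ext v
      simp only [Set.mem_empty_iff_false, iff_false]
      rintro ⟨hv, h⟩
      by_cases e : v = x
      · subst e; exact hv.2 hb
      obtain ⟨y, hy, _⟩ := exists_succ hT hv.1 h e
      rw [hb.2] at hy; exact hy
    rw [mass_leaf hT hb, FF, mass_leaf hT hb, mass_leaf hT hb, dd, sub_self, he]
    exact hasSum_empty
  · have hxi : x ∈ intr T := ⟨hx, hb⟩
    have h1 := mass_pos hT hG hP hx
    let g : List ℕ → ℝ := fun z => mass T P z * Dloc T P Q z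
    have hy : HasSum (fun y : succs T x => mass T (dd P Q) y - FF T P Q y)
        (mass T (dd P Q) x - ∑' y : succs T x, FF T P Q y) :=
      (mass_hasSum hT hD hxi).sub (FF_summable hT hG hP hQ hD hxi).hasSum
    let e := Set.unionEqSigmaOfDisjoint (icone_disj T x)
    have hU : HasSum (fun z : (⋃ y : succs T x, icone T y : Set (List ℕ)) => g z)
        (mass T (dd P Q) x - ∑' y : succs T x, FF T P Q y) := by
      rw [← e.symm.hasSum_iff]
      have hs : Summable ((fun z : (⋃ y : succs T x, icone T y : Set (List ℕ)) => g z) ∘ e.symm) := by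
        rw [summable_sigma_of_nonneg]
        · refine ⟨fun y => (ih y y.2).summable, ?_⟩
          refine hy.summable.congr fun y => ?_
          exact (ih y y.2).tsum_eq.symm
        · rintro ⟨y, z⟩
          exact Dloc_nonneg hT hG hP hQ hD z.2.1
      have h3 := hs.hasSum.sigma (g := fun y : succs T x => mass T (dd P Q) y - FF T P Q y)
        (fun y => ih y y.2)
      rw [hy.unique h3]
      exact hs.hasSum
    have h0 : HasSum (fun z : ({x} : Set (List ℕ)) => g z) (g x) := hasSum_singleton x g
    have hdis : Disjoint ({x} : Set (List ℕ)) (⋃ y : succs T x, icone T y) := by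
      rw [Set.disjoint_singleton_left, Set.mem_iUnion]
      rintro ⟨⟨y, hy⟩, _, h⟩
      obtain ⟨_, n, rfl⟩ := hy
      have := h.length_le
      simp at this
    have h4 := HasSum.add_disjoint (f := g) hdis h0 hU
    rw [icone_eq hT hxi]
    have h5 : mass T (dd P Q) x - FF T P Q x
       = g x + (mass T (dd P Q) x - ∑' y : succs T x, FF T P Q y) := by
      simp only [g]
      rw [Dloc, (Dloc_hasSum hT hG hP hQ hD hxi).tsum_eq, mul_div_cancel₀ _ h1.ne']
      ring
    rw [h5]
    exact h4
end

/-- Divergence interchange formula: if `H(P)` is finite and `D(P‖Q)` converges absolutely,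
then each `D_{p,q}(x)` converges absolutely and
`D(P‖Q)/ℓ(P) = ∑_{x ∈ interior T} μ_P(x)·D_{p,q}(x)/ℓ(x)`. -/
theorem divergence_interchange
    (T : Set (List ℕ)) (hT : IsTree T) (hU : NoUnary T) (hG : NoInfGeo T)
    (hB : (bdry T).Nonempty) (hroot : ([] : List ℕ) ∈ intr T)
    (ℓ : List ℕ → ℝ) (hℓ : ∀ x ∈ intr T, 0 < ℓ x)
    (P Q : List ℕ → ℝ) (hP : IsProbOn (bdry T) P) (hQ : IsProbOn (bdry T) Q)
    (hlen : Summable fun v : bdry T => lenWt ℓ v * P v)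
    (hH : Summable fun v : bdry T => phi (P v))
    (hD : Summable fun v : bdry T => |P v * Real.logb 2 (P v / Q v)|) :
    (∀ x ∈ intr T,
      Summable fun y : succs T x => |fwd T P x y * Real.logb 2 (fwd T P x y / fwd T Q x y)|) ∧
    (∑' v : bdry T, P v * Real.logb 2 (P v / Q v)) / expLen T ℓ P
      = ∑' x : intr T, nodeAvg T ℓ P x * (Dloc T P Q x / ℓ x) := by
  have hD' : Summable fun v : bdry T => dd P Q v := hD.of_abs
  refine ⟨fun x hx => (Dloc_hasSum hT hG hP hQ hD' hx).summable.abs, ?_⟩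
  have hi : icone T [] = intr T := by ext v; simp [icone]
  have hc : cone T [] = bdry T := by ext v; simp [cone]
  have h := main_ind hT hG hP hQ hD' [] hT.1
  have hm : ∀ f, mass T f [] = ∑' v : bdry T, f v := by intro f; rw [mass, hc]
  rw [FF, hm, hm, hm, hP.2.tsum_eq, hQ.2.tsum_eq, hi] at h
  have h2 := (h.div_const (expLen T ℓ P)).tsum_eq
  simp only [div_one, Real.logb_one, mul_zero, sub_zero] at h2
  simp only [dd] at h2
  rw [← h2]
  refine tsum_congr fun x => ?_
  have := (hℓ x x.2).ne'
  rw [nodeAvg]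
  field_simp
end
end

section
/- Random perturbations — convergence in probability: Let T be a rooted leafless tree (prefix-closed set of finite lists over ℕ, every vertex having at least two successors and none exactly one), with forward transition probabilities q(·|x) and q'(·|x) on N(x) at every vertex x. Assume both families {q(·|x)} and {q'(·|x)} are tight and their local entropy series are uniformly summable. Let (Ω, 𝔉, Pr) be a probability space and δ_n : Ω → [0,1] (n ≥ 0) measurable random variables; define the random transition probabilities p(y|x)(ω) = (1 − δ_{|x|}(ω))·q(y|x) + δ_{|x|}(ω)·q'(y|x) and the random flow B_P(x)(ω) as the product of p along the prefix chain from the root to x. Let ℓ be a length function and assume: (i) there are 0 < c₁ ≤ c₂ < ∞ with c₁ ≤ ℓ(x) ≤ c₂ for all x; (ii) there is a finite h with H_q(x)/ℓ(x) → h as |x| → ∞; (iii) there is D < ∞ with D_{q',q}(x) = ∑_{y∈N(x)} q'(y|x)·log₂(q'(y|x)/q(y|x)) absolutely convergent and < D for all x. If E(δ_n) → 0 as n → ∞, then H(P_n)/ℓ(P_n) → h in probability, i.e. for every ε > 0, Pr(|H(P_n)/ℓ(P_n) − h| > ε) → 0 as n → ∞. -/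
open scoped BigOperators
open Filter

noncomputable section

/-- A tight family of forward transition probabilities with uniformly summable entropies:
for every `ε > 0` there is `M` such that every `x ∈ T` admits `N_ε(x) ⊆ N(x)` with
`|N_ε(x)| ≤ M`, `∑_{y∈N(x)∖N_ε(x)} q(y|x) < ε` and `∑_{y∈N(x)∖N_ε(x)} φ(q(y|x)) < ε`. -/
def TightFam (T : Set (List ℕ)) (q : List ℕ → List ℕ → ℝ) : Prop :=
  ∀ ε : ℝ, 0 < ε → ∃ M : ℕ, ∀ x ∈ T,
    ∃ F : Finset (List ℕ), ↑F ⊆ succs T x ∧ F.card ≤ M ∧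
      (∑' y : {y : List ℕ // y ∈ succs T x ∧ y ∉ F}, q x y) < ε ∧
      (Summable fun y : {y : List ℕ // y ∈ succs T x ∧ y ∉ F} => phi (q x y)) ∧
      (∑' y : {y : List ℕ // y ∈ succs T x ∧ y ∉ F}, phi (q x y)) < ε

/-- The random perturbation `p(y|x)(ω) = (1 − δ_{|x|}(ω))·q(y|x) + δ_{|x|}(ω)·q'(y|x)`. -/
def perturb {Ω : Type*} (q q' : List ℕ → List ℕ → ℝ) (δn : ℕ → Ω → ℝ)
    (x y : List ℕ) (ω : Ω) : ℝ :=
  (1 - δn x.length ω) * q x y + δn x.length ω * q' x y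

/-- The (random) flow obtained by multiplying the transition probabilities `p` along the
prefix chain from the root to `x`. -/
def flowOf {Ω : Type*} (p : List ℕ → List ℕ → Ω → ℝ) (x : List ℕ) (ω : Ω) : ℝ :=
  ∏ i ∈ Finset.range x.length, p (x.take i) (x.take (i + 1)) ω

/-- The `n`-th level `S(n) = {x ∈ T : |x| = n}` of a leafless tree. -/
def levn (T : Set (List ℕ)) (n : ℕ) : Set (List ℕ) :=
  {x | x ∈ T ∧ x.length = n}

theorem phi_eq (t : ℝ) : phi t = Real.negMulLog t / Real.log 2 := by
  unfold phi Real.negMulLog Real.logb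
  rw [one_div, Real.log_inv]; ring

theorem phi_mul (a b : ℝ) : phi (a * b) = b * phi a + a * phi b := by
  simp only [phi_eq, Real.negMulLog_mul]; ring

theorem log_two_pos' : 0 < Real.log 2 := Real.log_pos (by norm_num)

theorem phi_nonneg {t : ℝ} (h0 : 0 ≤ t) (h1 : t ≤ 1) : 0 ≤ phi t := by
  rw [phi_eq]
  exact div_nonneg (Real.negMulLog_nonneg h0 h1) log_two_pos'.le

theorem phi_le_two {t : ℝ} (h0 : 0 ≤ t) : phi t ≤ 2 := by
  rw [phi_eq, div_le_iff₀ log_two_pos']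
  have h2 : (1:ℝ)/2 ≤ Real.log 2 := by have := Real.log_two_gt_d9; linarith
  have : Real.negMulLog t ≤ 1 := by
    rcases h0.eq_or_lt with rfl | hp
    · simp
    · have := Real.log_le_sub_one_of_pos (inv_pos.2 hp)
      rw [Real.log_inv] at this
      unfold Real.negMulLog
      have h3 := mul_le_mul_of_nonneg_left this h0
      have h4 : t * (t⁻¹ - 1) = 1 - t := by field_simp
      linarith
  linarith

theorem phi_concave {a b t : ℝ} (ha : 0 ≤ a) (hb : 0 ≤ b) (h0 : 0 ≤ t) (h1 : t ≤ 1) :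
    (1 - t) * phi a + t * phi b ≤ phi ((1 - t) * a + t * b) := by
  have := Real.concaveOn_negMulLog.2 (x := a) (y := b) ha hb (sub_nonneg.2 h1) h0 (by ring)
  simp only [smul_eq_mul] at this
  simp only [phi_eq]
  rw [← mul_div_assoc, ← mul_div_assoc, ← add_div]
  exact div_le_div_of_nonneg_right this log_two_pos'.le

theorem phi_subadd {a b : ℝ} (ha : 0 ≤ a) (hb : 0 ≤ b) : phi (a + b) ≤ phi a + phi b := by
  simp only [phi_eq]
  rw [← add_div]
  refine div_le_div_of_nonneg_right ?_ log_two_pos'.le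
  rcases ha.eq_or_lt with rfl | ha'
  · simp
  rcases hb.eq_or_lt with rfl | hb'
  · simp
  have h1 := Real.log_le_log ha' (by linarith : a ≤ a + b)
  have h2 := Real.log_le_log hb' (by linarith : b ≤ a + b)
  unfold Real.negMulLog
  nlinarith [mul_le_mul_of_nonneg_left h1 ha, mul_le_mul_of_nonneg_left h2 hb]

theorem phi_upper {a b t : ℝ} (ha : 0 ≤ a) (hb : 0 ≤ b) (h0 : 0 ≤ t) (h1 : t ≤ 1) :
    phi ((1 - t) * a + t * b) ≤
      (1 - t) * phi a + t * phi b + (phi (1 - t) * a + phi t * b) := by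
  have := phi_subadd (mul_nonneg (sub_nonneg.2 h1) ha) (mul_nonneg h0 hb)
  rw [phi_mul, phi_mul] at this
  linarith

/-- Local entropy perturbation. -/
theorem entropy_perturb {ι : Type*} {a b : ι → ℝ} (ha : ∀ i, 0 ≤ a i) (hb : ∀ i, 0 ≤ b i)
    (ha1 : HasSum a 1) (hb1 : HasSum b 1) {H H' C t : ℝ}
    (hH : HasSum (fun i => phi (a i)) H) (hH' : HasSum (fun i => phi (b i)) H')
    (hH0 : 0 ≤ H) (hH'0 : 0 ≤ H') (hHC : H ≤ C) (hH'C : H' ≤ C)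
    (h0 : 0 ≤ t) (h1 : t ≤ 1) :
    ∃ K, HasSum (fun i => phi ((1 - t) * a i + t * b i)) K ∧
      |K - H| ≤ C * t + phi t + phi (1 - t) := by
  have hlo := (hH.mul_left (1 - t)).add (hH'.mul_left t)
  have hup := hlo.add ((ha1.mul_left (phi (1 - t))).add (hb1.mul_left (phi t)))
  have hs : Summable (fun i => phi ((1 - t) * a i + t * b i)) := by
    have h2 : Summable (fun i => phi ((1 - t) * a i + t * b i)
        - ((1 - t) * phi (a i) + t * phi (b i))) := by
      refine Summable.of_nonneg_of_le (fun i => ?_) (fun i => ?_)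
        ((ha1.mul_left (phi (1 - t))).add (hb1.mul_left (phi t))).summable
      · exact sub_nonneg.2 (phi_concave (ha i) (hb i) h0 h1)
      · have := phi_upper (ha i) (hb i) h0 h1
        linarith
    have := h2.add hlo.summable
    simpa using this
  refine ⟨_, hs.hasSum, ?_⟩
  have e1 := hasSum_le (fun i => phi_concave (ha i) (hb i) h0 h1) hlo hs.hasSum
  have e2 := hasSum_le (fun i => phi_upper (ha i) (hb i) h0 h1) hs.hasSum hup
  have p1 := phi_nonneg h0 h1
  have p2 := phi_nonneg (sub_nonneg.2 h1) (by linarith : 1 - t ≤ 1)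
  have q1 := mul_le_mul_of_nonneg_left hHC h0
  have q2 := mul_le_mul_of_nonneg_left hH'C h0
  have q3 := mul_nonneg h0 hH0
  have q4 := mul_nonneg h0 hH'0
  rw [abs_le]
  constructor <;> nlinarith

theorem tight_bound {T : Set (List ℕ)} {q : List ℕ → List ℕ → ℝ}
    (hq0 : ∀ x ∈ T, ∀ y ∈ succs T x, 0 ≤ q x y)
    (hq1 : ∀ x ∈ T, HasSum (fun y : succs T x => q x y) 1)
    (ht : TightFam T q) :
    ∃ C : ℝ, ∀ x ∈ T, ∃ H, HasSum (fun y : succs T x => phi (q x y)) H ∧ 0 ≤ H ∧ H ≤ C := by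
  obtain ⟨M, hM⟩ := ht 1 one_pos
  refine ⟨M * 2 + 1, fun x hx => ?_⟩
  obtain ⟨F, hF, hcard, -, hsum, hlt⟩ := hM x hx
  have hA : HasSum ((fun y => phi (q x y)) ∘ (Subtype.val : (↑F : Set (List ℕ)) → List ℕ))
      (∑ y ∈ F, phi (q x y)) := by
    have := F.hasSum (fun y => phi (q x y))
    exact this
  have hB : HasSum ((fun y => phi (q x y)) ∘
      (Subtype.val : {y : List ℕ | y ∈ succs T x ∧ y ∉ F} → List ℕ)) _ := hsum.hasSum
  have hd : Disjoint (↑F : Set (List ℕ)) {y : List ℕ | y ∈ succs T x ∧ y ∉ F} := by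
    rw [Set.disjoint_left]
    intro y h1 h2
    exact h2.2 h1
  have hu : (↑F : Set (List ℕ)) ∪ {y : List ℕ | y ∈ succs T x ∧ y ∉ F} = succs T x := by
    ext y
    constructor
    · rintro (h1 | h1)
      · exact hF h1
      · exact h1.1
    · intro h1
      by_cases h2 : y ∈ F
      · exact Or.inl h2
      · exact Or.inr ⟨h1, h2⟩
  have hC := hA.add_disjoint hd hB
  rw [hu] at hC
  have hle : ∀ y ∈ succs T x, q x y ≤ 1 := fun y hy =>
    le_hasSum (hq1 x hx) (⟨y, hy⟩ : succs T x) (fun z _ => hq0 x hx z z.2)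
  refine ⟨_, hC, ?_, ?_⟩
  · exact hC.nonneg fun y : succs T x => phi_nonneg (hq0 x hx y y.2) (hle y y.2)
  · have h1 : ∑ y ∈ F, phi (q x y) ≤ F.card * 2 := by
      have := Finset.sum_le_card_nsmul F (fun y => phi (q x y)) 2
        (fun y hy => phi_le_two (hq0 x hx y (hF hy)))
      simpa using this
    have h2 : (F.card : ℝ) ≤ M := by exact_mod_cast hcard
    have h3 : (∑' y : {y : List ℕ | y ∈ succs T x ∧ y ∉ F}, phi (q x y)) < 1 := hlt
    simp only [Function.comp_def] at *
    linarith

theorem level_step {T : Set (List ℕ)} (hT : IsTree T) {n : ℕ} {F G : List ℕ → ℝ} {s : ℝ}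
    (hF : ∀ y ∈ levn T (n + 1), 0 ≤ F y)
    (hG : ∀ x ∈ levn T n, HasSum (fun y : succs T x => F y) (G x))
    (hs : HasSum (fun x : levn T n => G x) s) :
    HasSum (fun y : levn T (n + 1) => F y) s := by
  have hmem : ∀ z : Σ x : levn T n, succs T x, (z.2 : List ℕ) ∈ levn T (n + 1) := by
    rintro ⟨⟨x, hx, hn⟩, ⟨y, hy, m, rfl⟩⟩
    exact ⟨hy, by simp [hn]⟩
  let e : (Σ x : levn T n, succs T x) → levn T (n + 1) := fun z => ⟨z.2, hmem z⟩
  have he : Function.Bijective e := by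
    constructor
    · rintro ⟨⟨x, hx, hn⟩, ⟨y, hy, m, rfl⟩⟩ ⟨⟨x', hx', hn'⟩, ⟨y', hy', m', rfl⟩⟩ h
      have h' : x ++ [m] = x' ++ [m'] := congrArg Subtype.val h
      obtain ⟨rfl, h2⟩ := List.append_inj h' (by rw [hn, hn'])
      obtain rfl : m = m' := by simpa using h2
      rfl
    · rintro ⟨y, hy, hn⟩
      have hne : y ≠ [] := by rintro rfl; simp at hn
      have hd := List.dropLast_append_getLast hne
      refine ⟨⟨⟨y.dropLast, hT.2 y hy _ (List.dropLast_prefix y), by simp [hn]⟩,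
        ⟨y, hy, _, hd.symm⟩⟩, rfl⟩
  rw [← (Equiv.ofBijective e he).hasSum_iff]
  have hsum : Summable (fun z : Σ x : levn T n, succs T x => F z.2) := by
    rw [summable_sigma_of_nonneg (fun z => hF _ (hmem z))]
    refine ⟨fun x => (hG x x.2).summable, ?_⟩
    have : (fun x : levn T n => ∑' y : succs T x, F y) = fun x : levn T n => G x :=
      funext fun x => (hG x x.2).tsum_eq
    exact this ▸ hs.summable
  exact HasSum.sigma_of_hasSum hs (fun x => hG x x.2) hsum

theorem chain {T : Set (List ℕ)} (hT : IsTree T) {p : List ℕ → List ℕ → ℝ}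
    (hp0 : ∀ x ∈ T, ∀ y ∈ succs T x, 0 ≤ p x y)
    (hp1 : ∀ x ∈ T, HasSum (fun y : succs T x => p x y) 1)
    {B ℓ Hp : List ℕ → ℝ} (hBnil : B [] = 1)
    (hB : ∀ x ∈ T, ∀ y ∈ succs T x, B y = B x * p x y)
    {c₁ c₂ h : ℝ} (hℓ : ∀ x ∈ T, c₁ ≤ ℓ x ∧ ℓ x ≤ c₂) (hc₁ : 0 < c₁)
    (hHp : ∀ x ∈ T, HasSum (fun y : succs T x => phi (p x y)) (Hp x))
    {g : ℕ → ℝ} (hg : ∀ x ∈ T, |Hp x - h * ℓ x| ≤ g x.length) (n : ℕ) :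
    (∀ x ∈ levn T n, 0 ≤ B x) ∧ (∀ x ∈ levn T n, 0 ≤ lenWt ℓ x) ∧
    HasSum (fun x : levn T n => B x) 1 ∧
    ∃ E L, HasSum (fun x : levn T n => phi (B x)) E ∧
      HasSum (fun x : levn T n => lenWt ℓ x * B x) L ∧ c₁ * n ≤ L ∧
      |E - h * L| ≤ ∑ k ∈ Finset.range n, g k := by
  have hpar : ∀ n, ∀ y ∈ levn T (n+1), ∃ x ∈ levn T n, y ∈ succs T x := by
    rintro n y ⟨hy, hn⟩
    have hne : y ≠ [] := by rintro rfl; simp at hn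
    have hd := List.dropLast_append_getLast hne
    exact ⟨y.dropLast, ⟨hT.2 y hy _ (List.dropLast_prefix y), by simp [hn]⟩, hy, _, hd.symm⟩
  have hlen : ∀ x y, y ∈ succs T x → lenWt ℓ y = lenWt ℓ x + ℓ x := by
    rintro x y ⟨hy, m, rfl⟩
    unfold lenWt
    rw [List.length_append, List.length_singleton, Finset.sum_range_succ]
    congr 1
    · refine Finset.sum_congr rfl fun i hi => ?_
      rw [List.take_append_of_le_length (Finset.mem_range.1 hi).le]
    · simp
  induction n with
  | zero =>
    have hl : levn T 0 = {[]} := by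
      ext x
      constructor
      · rintro ⟨_, h⟩; simpa using h
      · rintro rfl; exact ⟨hT.1, rfl⟩
    rw [hl]
    have hs : ∀ f : List ℕ → ℝ, HasSum (fun x : ({[]} : Set (List ℕ)) => f x) (f []) := fun f =>
      hasSum_unique (fun x : ({[]} : Set (List ℕ)) => f x)
    refine ⟨?_, ?_, ?_, 0, 0, ?_, ?_, ?_, ?_⟩
    · rintro x rfl; rw [hBnil]; norm_num
    · rintro x rfl; simp [lenWt]
    · simpa [hBnil] using hs B
    · simpa [hBnil, phi] using hs (fun x => phi (B x))
    · simpa [lenWt] using hs (fun x => lenWt ℓ x * B x)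
    · simp
    · simp
  | succ n ih =>
    obtain ⟨hB0, hl0, hB1, E, L, hE, hL, hLn, hEL⟩ := ih
    have hB0' : ∀ y ∈ levn T (n + 1), 0 ≤ B y := by
      intro y hy
      obtain ⟨x, hx, hxy⟩ := hpar n y hy
      rw [hB x hx.1 y hxy]
      exact mul_nonneg (hB0 x hx) (hp0 x hx.1 y hxy)
    have hl0' : ∀ y ∈ levn T (n + 1), 0 ≤ lenWt ℓ y := by
      intro y hy
      obtain ⟨x, hx, hxy⟩ := hpar n y hy
      rw [hlen x y hxy]
      have := (hℓ x hx.1).1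
      have := hl0 x hx
      linarith
    have hstep : ∀ x ∈ levn T n, HasSum (fun y : succs T x => B y) (B x) := by
      intro x hx
      have := (hp1 x hx.1).mul_left (B x)
      rw [mul_one] at this
      have h2 : (fun y : succs T x => B y) = fun y : succs T x => B x * p x y :=
        funext fun y => hB x hx.1 y y.2
      rw [h2]; exact this
    have hB1' : HasSum (fun x : levn T (n + 1) => B x) 1 := level_step hT hB0' hstep hB1
    have hBle : ∀ y ∈ levn T (n + 1), B y ≤ 1 := fun y hy =>
      le_hasSum hB1' (⟨y, hy⟩ : levn T (n + 1)) (fun z _ => hB0' z z.2)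
    refine ⟨hB0', hl0', hB1', ?_⟩
    -- sum of B * ℓ
    have hsl : Summable (fun x : levn T n => B x * ℓ x) := by
      refine Summable.of_nonneg_of_le (fun x => ?_) (fun x => ?_) (hB1.summable.mul_right c₂)
      · exact mul_nonneg (hB0 x x.2) (hc₁.le.trans (hℓ x x.2.1).1)
      · exact mul_le_mul_of_nonneg_left (hℓ x x.2.1).2 (hB0 x x.2)
    have hbd : ∀ x : levn T n, |B x * (Hp x - h * ℓ x)| ≤ B x * g n := by
      intro x
      rw [abs_mul, abs_of_nonneg (hB0 x x.2)]
      have := hg x x.2.1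
      rw [x.2.2] at this
      exact mul_le_mul_of_nonneg_left this (hB0 x x.2)
    have hsd : Summable (fun x : levn T n => B x * (Hp x - h * ℓ x)) :=
      Summable.of_norm_bounded (hB1.summable.mul_right (g n)) hbd
    have hsH : Summable (fun x : levn T n => B x * Hp x) := by
      have := hsd.add (hsl.mul_left h)
      refine this.congr fun x => by ring
    have hBg : HasSum (fun x : levn T n => B x * g n) (g n) := by
      simpa using hB1.mul_right (g n)
    have hdd := hsH.hasSum.sub (hsl.hasSum.mul_left h)
    set S := ∑' x : levn T n, B x * Hp x
    set R := ∑' x : levn T n, B x * ℓ x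
    have hR : c₁ ≤ R := by
      have h1 := hB1.mul_right c₁
      rw [one_mul] at h1
      exact hasSum_le (fun x : levn T n => mul_le_mul_of_nonneg_left (hℓ x x.2.1).1 (hB0 x x.2)) h1
        hsl.hasSum
    have hSR : |S - h * R| ≤ g n := by
      rw [abs_le]
      constructor
      · refine hasSum_le (fun x => ?_) hBg.neg hdd
        have := (abs_le.1 (hbd x)).1
        linarith
      · refine hasSum_le (fun x => ?_) hdd hBg
        have := (abs_le.1 (hbd x)).2
        linarith
    refine ⟨E + S, L + R, ?_, ?_, ?_, ?_⟩
    · refine level_step hT (F := fun y => phi (B y)) (G := fun x => phi (B x) + B x * Hp x)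
        (fun y hy => phi_nonneg (hB0' y hy) (hBle y hy)) (fun x hx => ?_) (hE.add hsH.hasSum)
      have h1 := ((hp1 x hx.1).mul_left (phi (B x))).add ((hHp x hx.1).mul_left (B x))
      rw [mul_one] at h1
      have : (fun y : succs T x => phi (B y)) =
          fun y : succs T x => phi (B x) * p x y + B x * phi (p x y) := by
        funext y
        rw [hB x hx.1 y y.2, phi_mul]; ring
      simp only [this]; exact h1
    · refine level_step hT (F := fun y => lenWt ℓ y * B y)
        (G := fun x => lenWt ℓ x * B x + B x * ℓ x)
        (fun y hy => mul_nonneg (hl0' y hy) (hB0' y hy)) (fun x hx => ?_) (hL.add hsl.hasSum)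
      have h1 := (hstep x hx).mul_left (lenWt ℓ x + ℓ x)
      have : (fun y : succs T x => lenWt ℓ y * B y) =
          fun y : succs T x => (lenWt ℓ x + ℓ x) * B y := by
        funext y
        rw [hlen x y y.2]
      have h3 : lenWt ℓ x * B x + B x * ℓ x = (lenWt ℓ x + ℓ x) * B x := by ring
      simp only [this, h3]; exact h1
    · push_cast; linarith
    · rw [Finset.sum_range_succ]
      calc |E + S - h * (L + R)| = |(E - h * L) + (S - h * R)| := by ring_nf
        _ ≤ _ := (abs_add_le _ _).trans (add_le_add hEL hSR)

theorem phi_small (η : ℝ) (hη : 0 < η) :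
    ∃ K : ℝ, 0 ≤ K ∧ ∀ t : ℝ, 0 ≤ t → t ≤ 1 → phi t + phi (1 - t) ≤ η + K * t := by
  have hc : Continuous phi := by
    have : phi = fun t => Real.negMulLog t / Real.log 2 := funext phi_eq
    rw [this]; exact Real.continuous_negMulLog.div_const _
  have hc2 : Continuous (fun t => phi t + phi (1 - t)) := by fun_prop
  have h0 : phi 0 + phi (1 - 0) = 0 := by simp [phi]
  obtain ⟨d, hd, hd'⟩ := Metric.continuous_iff.1 hc2 0 η hη
  refine ⟨4 / d, by positivity, fun t ht0 ht1 => ?_⟩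
  by_cases htd : t < d
  · have := hd' t (by rw [Real.dist_eq, sub_zero, abs_of_nonneg ht0]; exact htd)
    rw [h0, Real.dist_eq, sub_zero] at this
    have := (abs_lt.1 this).2
    have : 0 ≤ 4 / d * t := by positivity
    linarith
  · push Not at htd
    have h1 := phi_le_two ht0
    have h2 := phi_le_two (sub_nonneg.2 ht1)
    have : 4 ≤ 4 / d * t := by
      rw [div_mul_eq_mul_div, le_div_iff₀ hd]; nlinarith
    linarith

open MeasureTheory in
/-- Random perturbations, convergence in probability: if `E(δ_n) → 0`, then
`H(P_n)/ℓ(P_n) → h` in probability. -/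
theorem random_perturbation_in_probability
    {Ω : Type*} [MeasurableSpace Ω] (Pr : Measure Ω) [IsProbabilityMeasure Pr]
    (T : Set (List ℕ)) (hT : IsTree T)
    (hbranch : ∀ x ∈ T, ∃ y ∈ succs T x, ∃ z ∈ succs T x, y ≠ z)
    (q q' : List ℕ → List ℕ → ℝ)
    (hq0 : ∀ x ∈ T, ∀ y ∈ succs T x, 0 ≤ q x y)
    (hq1 : ∀ x ∈ T, HasSum (fun y : succs T x => q x y) 1)
    (hq'0 : ∀ x ∈ T, ∀ y ∈ succs T x, 0 ≤ q' x y)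
    (hq'1 : ∀ x ∈ T, HasSum (fun y : succs T x => q' x y) 1)
    (htq : TightFam T q) (htq' : TightFam T q')
    (δn : ℕ → Ω → ℝ) (hmeas : ∀ n : ℕ, Measurable (δn n))
    (hδ01 : ∀ n ω, δn n ω ∈ Set.Icc (0:ℝ) 1)
    (ℓ : List ℕ → ℝ) (c₁ c₂ : ℝ) (hc₁ : 0 < c₁) (hc₁₂ : c₁ ≤ c₂)
    (hℓ : ∀ x ∈ T, c₁ ≤ ℓ x ∧ ℓ x ≤ c₂)
    (h : ℝ)
    (hh : ∀ ε : ℝ, 0 < ε → ∃ k : ℕ, ∀ x ∈ T, k ≤ x.length →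
      |(∑' y : succs T x, phi (q x y)) / ℓ x - h| < ε)
    (D : ℝ)
    (hD : ∀ x ∈ T,
      (Summable fun y : succs T x => |q' x y * Real.logb 2 (q' x y / q x y)|) ∧
      (∑' y : succs T x, q' x y * Real.logb 2 (q' x y / q x y)) < D)
    (hE : Tendsto (fun n : ℕ => ∫ ω, δn n ω ∂Pr) atTop (nhds 0)) :
    ∀ ε : ℝ, 0 < ε →
      Tendsto (fun n : ℕ => Pr {ω : Ω |
          ε < |(∑' x : levn T n, phi (flowOf (perturb q q' δn) x ω))
                / (∑' x : levn T n, lenWt ℓ x * flowOf (perturb q q' δn) x ω) - h|})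
        atTop (nhds 0) := by
  intro ε hε
  obtain ⟨Ca, hCa⟩ := tight_bound hq0 hq1 htq
  obtain ⟨Cb, hCb⟩ := tight_bound hq'0 hq'1 htq'
  choose! Ha hHa hHa0 hHaC using hCa
  choose! Hb hHb hHb0 hHbC using hCb
  set C := max Ca Cb with hC
  have hHaC' : ∀ x ∈ T, Ha x ≤ C := fun x hx => (hHaC x hx).trans (le_max_left _ _)
  have hHbC' : ∀ x ∈ T, Hb x ≤ C := fun x hx => (hHbC x hx).trans (le_max_right _ _)
  have hC0 : 0 ≤ C := (hHa0 [] hT.1).trans (hHaC' [] hT.1)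
  have hc₂ : 0 < c₂ := hc₁.trans_le hc₁₂
  obtain ⟨K, hK0, hK⟩ := phi_small (ε * c₁ / 4) (by positivity)
  obtain ⟨k₀, hk₀⟩ := hh (ε * c₁ / (4 * c₂)) (by positivity)
  let a : ℕ → ℝ := fun k => if k < k₀ then C + |h| * c₂ else 0
  have ha0 : ∀ k, 0 ≤ a k := by
    intro k; simp only [a]; split_ifs <;> positivity
  have haC : ∀ x ∈ T, |Ha x - h * ℓ x| ≤ ε * c₁ / 4 + a x.length := by
    intro x hx
    have hl := hℓ x hx
    have hlp : 0 < ℓ x := hc₁.trans_le hl.1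
    by_cases hk : x.length < k₀
    · simp only [a, if_pos hk]
      have h1 : |Ha x - h * ℓ x| ≤ |Ha x| + |h * ℓ x| := abs_sub _ _
      rw [abs_of_nonneg (hHa0 x hx), abs_mul, abs_of_pos hlp] at h1
      have h2 := mul_le_mul_of_nonneg_left hl.2 (abs_nonneg h)
      have h3 := hHaC' x hx
      have : 0 ≤ ε * c₁ / 4 := by positivity
      linarith
    · simp only [a, if_neg hk, add_zero]
      have h1 := hk₀ x hx (not_lt.1 hk)
      rw [(hHa x hx).tsum_eq] at h1
      have h2 : Ha x - h * ℓ x = (Ha x / ℓ x - h) * ℓ x := by field_simp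
      rw [h2, abs_mul, abs_of_pos hlp]
      calc _ ≤ (ε * c₁ / (4 * c₂)) * c₂ := mul_le_mul h1.le hl.2 hlp.le (by positivity)
        _ = _ := by field_simp
  let b : ℕ → Ω → ℝ := fun k ω => a k + (C + K) * δn k ω
  have hb0 : ∀ k ω, 0 ≤ b k ω := fun k ω =>
    add_nonneg (ha0 k) (mul_nonneg (add_nonneg hC0 hK0) (hδ01 k ω).1)
  have hδi : ∀ k, Integrable (δn k) Pr := fun k =>
    Integrable.of_bound (hmeas k).aestronglyMeasurable 1 (Eventually.of_forall fun ω => by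
      rw [Real.norm_eq_abs, abs_of_nonneg (hδ01 k ω).1]; exact (hδ01 k ω).2)
  have hbi : ∀ k, Integrable (b k) Pr := fun k =>
    (integrable_const _).add ((hδi k).const_mul _)
  have hbE : Tendsto (fun k => ∫ ω, b k ω ∂Pr) atTop (nhds 0) := by
    have h1 : ∀ k, ∫ ω, b k ω ∂Pr = a k + (C + K) * ∫ ω, δn k ω ∂Pr := by
      intro k
      simp only [b]
      rw [integral_add (integrable_const _) ((hδi k).const_mul _), integral_const_mul]
      simp
    simp only [h1]
    have h2 : Tendsto a atTop (nhds 0) := by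
      refine tendsto_const_nhds.congr' ?_
      filter_upwards [eventually_ge_atTop k₀] with k hk
      simp [a, not_lt.2 hk]
    simpa using h2.add (hE.const_mul (C + K))
  have hkey : ∀ n : ℕ, 0 < n → ∀ ω,
      |(∑' x : levn T n, phi (flowOf (perturb q q' δn) x ω))
        / (∑' x : levn T n, lenWt ℓ x * flowOf (perturb q q' δn) x ω) - h| ≤
      ε / 2 + c₁⁻¹ * ((n : ℝ)⁻¹ * ∑ k ∈ Finset.range n, b k ω) := by
    intro n hn ω
    have hex : ∀ x ∈ T, ∃ Kx, HasSum (fun y : succs T x => phi (perturb q q' δn x y ω)) Kx ∧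
        |Kx - Ha x| ≤ C * δn x.length ω + phi (δn x.length ω) + phi (1 - δn x.length ω) :=
      fun x hx => entropy_perturb (fun y : succs T x => hq0 x hx y y.2) (fun y : succs T x => hq'0 x hx y y.2)
        (hq1 x hx) (hq'1 x hx) (hHa x hx) (hHb x hx) (hHa0 x hx) (hHb0 x hx)
        (hHaC' x hx) (hHbC' x hx) (hδ01 _ ω).1 (hδ01 _ ω).2
    choose! Hp hHp hHp' using hex
    have hch := chain hT (p := fun x y => perturb q q' δn x y ω)
      (B := fun x => flowOf (perturb q q' δn) x ω) (ℓ := ℓ) (Hp := Hp) (h := h)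
      (c₁ := c₁) (c₂ := c₂) (g := fun k => ε * c₁ / 2 + b k ω)
      (fun x hx y hy => add_nonneg
        (mul_nonneg (sub_nonneg.2 (hδ01 _ ω).2) (hq0 x hx y hy))
        (mul_nonneg (hδ01 _ ω).1 (hq'0 x hx y hy)))
      (fun x hx => by
        have := ((hq1 x hx).mul_left (1 - δn x.length ω)).add
          ((hq'1 x hx).mul_left (δn x.length ω))
        rw [mul_one, mul_one, sub_add_cancel] at this
        exact this)
      (by simp [flowOf])
      (by
        rintro x hx y ⟨hy, m, rfl⟩
        unfold flowOf
        rw [List.length_append, List.length_singleton, Finset.prod_range_succ]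
        congr 1
        · refine Finset.prod_congr rfl fun i hi => ?_
          have hi' := Finset.mem_range.1 hi
          rw [List.take_append_of_le_length hi'.le, List.take_append_of_le_length hi']
        · rw [List.take_append_of_le_length le_rfl, List.take_length,
            List.take_of_length_le (by simp)])
      hℓ hc₁ hHp
      (by
        intro x hx
        have h1 := hHp' x hx
        have h2 := haC x hx
        have h3 := hK _ (hδ01 x.length ω).1 (hδ01 x.length ω).2
        have h4 : |Hp x - h * ℓ x| ≤ |Hp x - Ha x| + |Ha x - h * ℓ x| := abs_sub_le _ _ _
        simp only [b]
        linarith) n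
    obtain ⟨-, -, -, E, L, hEs, hLs, hLn, hEL⟩ := hch
    rw [hEs.tsum_eq, hLs.tsum_eq]
    have hn' : (0:ℝ) < n := by exact_mod_cast hn
    have hcn : 0 < c₁ * n := mul_pos hc₁ hn'
    have hL : 0 < L := hcn.trans_le hLn
    have e1 : E / L - h = (E - h * L) / L := by field_simp
    rw [e1, abs_div, abs_of_pos hL]
    calc |E - h * L| / L ≤ |E - h * L| / (c₁ * n) :=
          div_le_div_of_nonneg_left (abs_nonneg _) hcn hLn
      _ ≤ (∑ k ∈ Finset.range n, (ε * c₁ / 2 + b k ω)) / (c₁ * n) :=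
          div_le_div_of_nonneg_right hEL hcn.le
      _ = _ := by
          rw [Finset.sum_add_distrib]
          simp only [Finset.sum_const, Finset.card_range, nsmul_eq_mul]
          field_simp
  have hces := hbE.cesaro
  have hreal : Tendsto (fun n : ℕ => Pr.real {ω : Ω |
          ε < |(∑' x : levn T n, phi (flowOf (perturb q q' δn) x ω))
                / (∑' x : levn T n, lenWt ℓ x * flowOf (perturb q q' δn) x ω) - h|})
        atTop (nhds 0) := by
    have hlim := hces.const_mul ((ε * c₁ / 2)⁻¹)
    rw [mul_zero] at hlim
    refine tendsto_of_tendsto_of_tendsto_of_le_of_le' tendsto_const_nhds hlim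
      (Eventually.of_forall fun n => measureReal_nonneg) ?_
    filter_upwards [eventually_gt_atTop 0] with n hn
    have hint : Integrable (fun ω => (n : ℝ)⁻¹ * ∑ k ∈ Finset.range n, b k ω) Pr :=
      (integrable_finsetSum _ fun k _ => hbi k).const_mul _
    have hmk := mul_meas_ge_le_integral_of_nonneg (μ := Pr)
      (f := fun ω => (n : ℝ)⁻¹ * ∑ k ∈ Finset.range n, b k ω)
      (Eventually.of_forall fun ω => mul_nonneg (by positivity)
        (Finset.sum_nonneg fun k _ => hb0 k ω)) hint (ε * c₁ / 2)
    rw [integral_const_mul, integral_finsetSum _ (fun k _ => hbi k)] at hmk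
    have hpos : 0 < ε * c₁ / 2 := by positivity
    rw [inv_mul_eq_div, le_div_iff₀ hpos, mul_comm]
    refine le_trans (mul_le_mul_of_nonneg_left (measureReal_mono ?_) hpos.le) hmk
    intro ω hω
    have h1 : ε < _ := hω
    have h2 := h1.trans_le (hkey n hn ω)
    have h3 : ε / 2 < c₁⁻¹ * ((n : ℝ)⁻¹ * ∑ k ∈ Finset.range n, b k ω) := by linarith
    rw [inv_mul_eq_div, lt_div_iff₀ hc₁] at h3
    show ε * c₁ / 2 ≤ _
    linarith
  have := ENNReal.tendsto_ofReal hreal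
  rw [ENNReal.ofReal_zero] at this
  refine this.congr fun n => ?_
  exact ofReal_measureReal
end
end
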